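/- Let G = MC be a central product of finite groups, i.e. M and C are subgroups of G with G = MC and every element of M commutes with every element of C, and let Z = M ∩ C, so that Z ≤ Z(G). Then for every linear character λ of Z one has acd(G|λ) = acd(M|λ) · acd(C|λ). -/

import Mathlib

open CategoryTheory

/-- The set of irreducible complex characters of `G`: characters of simple
finite-dimensional complex representations of `G`. -/
noncomputable def IrrChar (G : Type) [Group G] : Set (G → ℂ) :=
  {χ | ∃ V : FDRep ℂ G, Simple V ∧ χ = fun g => V.character g}

/-- The degree of a character, read off from its value at `1`. -/
noncomputable def charDeg {G : Type} [Group G] (χ : G → ℂ) : ℕ :=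
  ⌊(χ 1).re⌋₊

/-- The average degree of the irreducible characters of `G` satisfying a
predicate `p` (with the convention that the average of the empty set is `0`). -/
noncomputable def acdRel (G : Type) [Group G] (p : (G → ℂ) → Prop) : ℝ :=
  (∑ᶠ χ ∈ {χ ∈ IrrChar G | p χ}, (charDeg χ : ℝ)) /
    ({χ ∈ IrrChar G | p χ} : Set (G → ℂ)).ncard

/-- The average character degree of `G`. -/
noncomputable def acd (G : Type) [Group G] : ℝ := acdRel G fun _ => True
/-- The average degree of the irreducible characters of `H` lying over the
linear character `lam` of a central subgroup, embedded in `H` via `ι`. -/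
noncomputable def acdOver {H Z : Type} [Group H] [Group Z] (ι : Z → H) (lam : Z → ℂ) : ℝ :=
  acdRel H fun χ => ∑ᶠ z : Z, χ (ι z) * starRingEnd ℂ (lam z) ≠ 0

/-!
By Schur's lemma a central subgroup acts on an irreducible representation by scalars, so `χ` lies
over `λ` exactly when translation by `z ∈ Z` multiplies `χ` by `λ z`. The irreducible
representations of `M × C` are the external tensor products `V ⊠ W`, and pulling back along the
multiplication map `M × C → G` identifies `Irr(G)` with those of them that are trivial on its
kernel, that is, those for which `V` and `W` lie over the same linear character of `Z`. Hence
`(α, β) ↦ (m * c ↦ α m * β c)` is a bijection `Irr(M|λ) × Irr(C|λ) → Irr(G|λ)` that multiplies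
degrees, and the average over a product of a product of functions is the product of the averages.

Burnside's density theorem takes the place of the orthogonality relations: the group algebra
surjects onto the endomorphisms of an irreducible representation, and it contains an element acting
as `1` on one of two inequivalent irreducibles and as `0` on the other, so that an irreducible
representation is determined by any nonzero multiple of its character.
-/

open scoped MonoidAlgebra TensorProduct

section SimpleModule

variable {A M N : Type*} [Ring A] [AddCommGroup M] [Module A M] [AddCommGroup N] [Module A N]

theorem exists_smul_eq_apply_of_isSimpleModule (k : Type*) [Field k] [IsAlgClosed k] [Algebra k A]
    [Module k M] [IsScalarTower k A M] [FiniteDimensional k M] [IsSimpleModule A M]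
    (f : M →ₗ[k] M) : ∃ a : A, ∀ m, a • m = f m := by
  have : Module.Finite (Module.End A M) M := .of_restrictScalars_finite k _ M
  let f' : Module.End (Module.End A M) M :=
    { f with
      map_smul' := fun φ m => by
        obtain ⟨c, rfl⟩ := (IsSimpleModule.algebraMap_end_bijective_of_isAlgClosed k).2 φ
        exact f.map_smul c m }
  obtain ⟨a, ha⟩ := Module.Finite.toModuleEnd_moduleEnd_surjective f'
  exact ⟨a, fun m => congr($ha m)⟩

theorem isSemisimpleModule_prod [IsSemisimpleModule A M] [IsSemisimpleModule A N] :
    IsSemisimpleModule A (M × N) := by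
  have hsup := IsSemisimpleModule.sup (IsSemisimpleModule.range (LinearMap.inl A M N))
    (IsSemisimpleModule.range (LinearMap.inr A M N))
  rw [LinearMap.sup_range_inl_inr] at hsup
  exact .congr Submodule.topEquiv.symm

theorem exists_smul_eq_self_and_smul_eq_zero [IsSimpleModule A M] [IsSimpleModule A N]
    [Module.Finite (Module.End A (M × N)) (M × N)] (hMN : IsEmpty (M ≃ₗ[A] N)) :
    ∃ a : A, (∀ m : M, a • m = m) ∧ ∀ n : N, a • n = 0 := by
  have map_fst_eq_zero (g : M →ₗ[A] N) : g = 0 :=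
    g.bijective_or_eq_zero.resolve_left fun h => hMN.false (.ofBijective g h)
  have map_snd_eq_zero (g : N →ₗ[A] M) : g = 0 :=
    g.bijective_or_eq_zero.resolve_left fun h => hMN.false (LinearEquiv.ofBijective g h).symm
  let p : Module.End (Module.End A (M × N)) (M × N) :=
    { toFun := fun x => (x.1, 0)
      map_add' := fun x y => by simp
      map_smul' := fun φ x => by
        have h₁ : (φ (x.1, 0)).2 = 0 :=
          congr($(map_fst_eq_zero (LinearMap.snd A M N ∘ₗ φ ∘ₗ LinearMap.inl A M N)) x.1)
        have h₂ : (φ (0, x.2)).1 = 0 :=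
          congr($(map_snd_eq_zero (LinearMap.fst A M N ∘ₗ φ ∘ₗ LinearMap.inr A M N)) x.2)
        have hx : φ x = φ (x.1, 0) + φ (0, x.2) := by rw [← map_add, Prod.fst_add_snd]
        ext <;> simp [hx, h₁, h₂] }
  have := isSemisimpleModule_prod (A := A) (M := M) (N := N)
  obtain ⟨a, ha⟩ := Module.Finite.toModuleEnd_moduleEnd_surjective p
  exact ⟨a, fun m => congr(($ha (m, 0)).1), fun n => congr(($ha (0, n)).2)⟩

end SimpleModule

section Irreducible

variable {k G H V W : Type*} [Field k] [AddCommGroup V] [Module k V] [AddCommGroup W] [Module k W]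

section Monoid

variable [Monoid G] [Monoid H] {ρ : Representation k G V} {σ : Representation k G W}

theorem asAlgebraHom_surjective_of_isIrreducible [IsAlgClosed k] [FiniteDimensional k V]
    (hρ : ρ.IsIrreducible) : Function.Surjective ρ.asAlgebraHom := fun f => by
  have : FiniteDimensional k ρ.asModule := .of_surjective _ ρ.asModuleEquiv.symm.surjective
  obtain ⟨a, ha⟩ := exists_smul_eq_apply_of_isSimpleModule (A := k[G]) k
    (ρ.asModuleEquiv.symm.conj f)
  exact ⟨a, LinearMap.ext ha⟩

theorem isIrreducible_comp_iff {f : H →* G} (hf : Function.Surjective f) :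
    Representation.IsIrreducible (ρ.comp f) ↔ ρ.IsIrreducible :=
  OrderIso.isSimpleOrder_iff
    { toFun := fun S => ⟨S.toSubmodule, hf.forall.2 S.apply_mem_toSubmodule⟩
      invFun := fun S => ⟨S.toSubmodule, fun h => S.apply_mem_toSubmodule (f h)⟩
      left_inv := fun _ => rfl
      right_inv := fun _ => rfl
      map_rel_iff' := .rfl }

theorem isIrreducible_toRepresentation_iff_isAtom {S : Subrepresentation ρ} :
    S.toRepresentation.IsIrreducible ↔ IsAtom S := by
  rw [← Set.isSimpleOrder_Iic_iff_isAtom]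
  exact OrderIso.isSimpleOrder_iff
    { toFun := fun T => ⟨⟨T.toSubmodule.map S.toSubmodule.subtype, by
        rintro g _ ⟨v, hv, rfl⟩
        exact ⟨_, T.apply_mem_toSubmodule g hv, rfl⟩⟩, Submodule.map_subtype_le _ _⟩
      invFun := fun T => ⟨T.1.toSubmodule.comap S.toSubmodule.subtype,
        fun g v hv => T.1.apply_mem_toSubmodule g hv⟩
      left_inv := fun T => Subrepresentation.toSubmodule_injective
        (Submodule.comap_map_eq_of_injective S.toSubmodule.injective_subtype _)
      right_inv := fun T => Subtype.ext <| Subrepresentation.toSubmodule_injective <|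
        (Submodule.map_comap_subtype _ _).trans (inf_eq_right.2 T.2)
      map_rel_iff' := Submodule.map_le_map_iff_of_injective S.toSubmodule.injective_subtype _ _ }

theorem exists_isIrreducible_toRepresentation [FiniteDimensional k V] [Nontrivial V]
    (ρ : Representation k G V) : ∃ S : Subrepresentation ρ, S.toRepresentation.IsIrreducible := by
  have toSubmodule_strictMono :
      StrictMono (Subrepresentation.toSubmodule : Subrepresentation ρ → Submodule k V) :=
    fun _ _ hST => hST
  have : IsAtomic (Subrepresentation ρ) :=
    isAtomic_of_orderBot_wellFounded_lt toSubmodule_strictMono.wellFoundedLT.wf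
  have : Nontrivial (Subrepresentation ρ) :=
    ⟨⊥, ⊤, fun h => bot_ne_top (α := Submodule k V) congr(($h).toSubmodule)⟩
  obtain ⟨S, hS⟩ := IsAtomic.exists_atom (Subrepresentation ρ)
  exact ⟨S, isIrreducible_toRepresentation_iff_isAtom.2 hS⟩

theorem nontrivial_of_isIrreducible (hρ : ρ.IsIrreducible) : Nontrivial V := by
  by_contra hV
  rw [not_nontrivial_iff_subsingleton] at hV
  exact bot_ne_top (Subrepresentation.toSubmodule_injective (ρ := ρ) (Subsingleton.elim _ _))

theorem nontrivial_intertwiningMap_toRepresentation {S : Subrepresentation ρ}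
    (hS : S.toRepresentation.IsIrreducible) :
    Nontrivial (Representation.IntertwiningMap S.toRepresentation ρ) := by
  have := nontrivial_of_isIrreducible hS
  obtain ⟨v, hv⟩ := exists_ne (0 : S.toSubmodule)
  exact ⟨⟨S.toSubmodule.subtype, fun _ => rfl⟩, 0, fun h => hv (Subtype.ext congr($h v))⟩

theorem trace_asAlgebraHom_eq_mul {c : k} (h : ρ.character = c • σ.character) (a : k[G]) :
    LinearMap.trace k V (ρ.asAlgebraHom a) = c * LinearMap.trace k W (σ.asAlgebraHom a) := by
  induction a using MonoidAlgebra.induction_linear with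
  | zero => simp
  | add x y hx hy => simp only [map_add, hx, hy, mul_add]
  | single g r =>
    have hg := congr_fun h g
    simp only [Representation.character, Pi.smul_apply, smul_eq_mul] at hg
    simp only [Representation.asAlgebraHom_single, map_smul, smul_eq_mul, hg, mul_left_comm]

theorem nonempty_equiv_of_character_eq_smul [CharZero k] [FiniteDimensional k V]
    [FiniteDimensional k W] (hρ : ρ.IsIrreducible) (hσ : σ.IsIrreducible) {c : k}
    (h : ρ.character = c • σ.character) : Nonempty (ρ.Equiv σ) := by
  by_contra hequiv
  have hsimple : IsEmpty (ρ.asModule ≃ₗ[k[G]] σ.asModule) := ⟨fun e => hequiv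
    ⟨((Representation.IntertwiningMap.equivLinearMapAsModule ρ σ).symm e).ofBijective e.bijective⟩⟩
  have : FiniteDimensional k ρ.asModule := .of_surjective _ ρ.asModuleEquiv.symm.surjective
  have : FiniteDimensional k σ.asModule := .of_surjective _ σ.asModuleEquiv.symm.surjective
  have : Module.Finite (Module.End k[G] (ρ.asModule × σ.asModule)) (ρ.asModule × σ.asModule) :=
    .of_restrictScalars_finite k _ _
  obtain ⟨a, haρ, haσ⟩ := exists_smul_eq_self_and_smul_eq_zero hsimple
  have hone : ρ.asAlgebraHom a = 1 := LinearMap.ext haρ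
  have hzero : σ.asAlgebraHom a = 0 := LinearMap.ext haσ
  have htrace := trace_asAlgebraHom_eq_mul h a
  rw [hone, hzero, LinearMap.trace_one, map_zero, mul_zero, Nat.cast_eq_zero] at htrace
  have := nontrivial_of_isIrreducible hρ
  exact Module.finrank_pos.ne' htrace

end Monoid

theorem exists_comp_eq_of_ker_le [Group G] [Group H] {f : H →* G} (hf : Function.Surjective f)
    {ρ : Representation k H V} (hker : f.ker ≤ MonoidHom.ker ρ) :
    ∃ σ : Representation k G V, σ.comp f = ρ := by
  refine ⟨(QuotientGroup.lift f.ker ρ hker).comp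
    (QuotientGroup.quotientKerEquivOfSurjective f hf).symm.toMonoidHom, MonoidHom.ext fun h => ?_⟩
  have hh : (QuotientGroup.quotientKerEquivOfSurjective f hf).symm (f h) = h :=
    (QuotientGroup.quotientKerEquivOfSurjective f hf).symm_apply_eq.2 rfl
  exact congr(QuotientGroup.lift f.ker ρ hker $hh)

end Irreducible

section ExternalTensorProduct

variable {k A B U V W : Type*} [Field k] [Monoid A] [Monoid B] [AddCommGroup U] [Module k U]
  [AddCommGroup V] [Module k V] [AddCommGroup W] [Module k W]

/-- The external tensor product `ρ ⊠ σ`, in which `(a, b)` acts on `V ⊗ W` by `ρ a ⊗ σ b`. -/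
noncomputable def externalTprod (ρ : Representation k A V) (σ : Representation k B W) :
    Representation k (A × B) (V ⊗[k] W) :=
  Representation.tprod (ρ.comp (MonoidHom.fst A B)) (σ.comp (MonoidHom.snd A B))

theorem character_externalTprod [FiniteDimensional k V] [FiniteDimensional k W]
    (ρ : Representation k A V) (σ : Representation k B W) (x : A × B) :
    (externalTprod ρ σ).character x = ρ.character x.1 * σ.character x.2 :=
  congr_fun (Representation.char_tensor _ _) x

theorem map_asAlgebraHom_mem {ρ : Representation k A V} {σ : Representation k B W}
    (S : Subrepresentation (externalTprod ρ σ)) (a : k[A]) (b : k[B]) {x : V ⊗[k] W} (hx : x ∈ S) :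
    TensorProduct.map (ρ.asAlgebraHom a) (σ.asAlgebraHom b) x ∈ S.toSubmodule := by
  induction a using MonoidAlgebra.induction_linear with
  | zero => simp
  | add a₁ a₂ h₁ h₂ =>
    simpa only [map_add, TensorProduct.map_add_left, LinearMap.add_apply] using
      S.toSubmodule.add_mem h₁ h₂
  | single a r =>
    induction b using MonoidAlgebra.induction_linear with
    | zero => simp
    | add b₁ b₂ h₁ h₂ =>
      simpa only [map_add, TensorProduct.map_add_right, LinearMap.add_apply] using
        S.toSubmodule.add_mem h₁ h₂
    | single b s =>
      simp only [Representation.asAlgebraHom_single, TensorProduct.map_smul_left,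
        TensorProduct.map_smul_right]
      exact S.toSubmodule.smul_mem _ (S.toSubmodule.smul_mem _ (S.apply_mem_toSubmodule (a, b) hx))

theorem apply_mem_of_forall_map_mem [FiniteDimensional k V] [FiniteDimensional k W]
    {S : Submodule k (V ⊗[k] W)}
    (hS : ∀ (f : V →ₗ[k] V) (g : W →ₗ[k] W), ∀ x ∈ S, TensorProduct.map f g x ∈ S)
    (h : V ⊗[k] W →ₗ[k] V ⊗[k] W) {x : V ⊗[k] W} (hx : x ∈ S) : h x ∈ S := by
  obtain ⟨t, rfl⟩ := (homTensorHomEquiv k V W V W).surjective h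
  induction t with
  | zero => simp
  | add t₁ t₂ h₁ h₂ => rw [map_add]; exact S.add_mem h₁ h₂
  | tmul f g => simpa using hS f g x hx

theorem isIrreducible_externalTprod [IsAlgClosed k] [FiniteDimensional k V] [FiniteDimensional k W]
    {ρ : Representation k A V} {σ : Representation k B W} (hρ : ρ.IsIrreducible)
    (hσ : σ.IsIrreducible) : (externalTprod ρ σ).IsIrreducible := by
  have := nontrivial_of_isIrreducible hρ
  have := nontrivial_of_isIrreducible hσ
  have apply_mem (S : Subrepresentation (externalTprod ρ σ)) (h : Module.End k (V ⊗[k] W))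
      {x : V ⊗[k] W} (hx : x ∈ S.toSubmodule) : h x ∈ S.toSubmodule := by
    refine apply_mem_of_forall_map_mem (fun f g y hy => ?_) h hx
    obtain ⟨a, rfl⟩ := asAlgebraHom_surjective_of_isIrreducible hρ f
    obtain ⟨b, rfl⟩ := asAlgebraHom_surjective_of_isIrreducible hσ g
    exact map_asAlgebraHom_mem S a b hy
  let submoduleIso :
      Subrepresentation (externalTprod ρ σ) ≃o Submodule (Module.End k (V ⊗[k] W)) (V ⊗[k] W) :=
    { toFun := fun S => { S.toSubmodule with smul_mem' := fun h _ hx => apply_mem S h hx }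
      invFun := fun T => ⟨T.restrictScalars k, fun x v hv => T.smul_mem (externalTprod ρ σ x) hv⟩
      left_inv := fun _ => rfl
      right_inv := fun _ => rfl
      map_rel_iff' := .rfl }
  exact submoduleIso.isSimpleOrder_iff.2 inferInstance

/-- The action of `B` by postcomposition on the space of `A`-equivariant maps `σ → τ`, which
carries the multiplicity of `σ` in `τ`. -/
def multiplicityRep (σ : Representation k A V) (τ : Representation k (A × B) U) :
    Representation k B (Representation.IntertwiningMap σ (τ.comp (MonoidHom.inl A B))) where
  toFun b := Representation.IntertwiningMap.llcomp _ _ _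
    ⟨τ (1, b), fun a => by simp [← Module.End.mul_eq_comp, ← map_mul]⟩
  map_one' := by ext φ v; exact congr($(map_one τ) (φ v))
  map_mul' b₁ b₂ := by
    ext φ v
    have : τ (1, b₁ * b₂) = τ (1, b₁) * τ (1, b₂) := by
      rw [← map_mul, Prod.mk_mul_mk, one_mul]
    exact congr($this (φ v))

/-- The evaluation map `v ⊗ φ ↦ φ v` on `σ ⊠ S`, for `S` a space of `A`-equivariant maps `σ → τ`
stable under `B`. -/
noncomputable def multiplicityEval {σ : Representation k A V} {τ : Representation k (A × B) U}
    (S : Subrepresentation (multiplicityRep σ τ)) :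
    Representation.IntertwiningMap (externalTprod σ S.toRepresentation) τ where
  toLinearMap := TensorProduct.lift
    (Representation.IntertwiningMap.toLinearMapl _ _ ∘ₗ S.toSubmodule.subtype).flip
  isIntertwining' x := by
    refine TensorProduct.ext' fun v φ => ?_
    have hφ : φ.1 (σ x.1 v) = τ (x.1, 1) (φ.1 v) := φ.1.isIntertwining _ _ x.1 v
    have hx : τ x = τ (1, x.2) * τ (x.1, 1) := by
      rw [← map_mul, Prod.mk_mul_mk, one_mul, mul_one]
    change τ (1, x.2) (φ.1 (σ x.1 v)) = τ x (φ.1 v)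
    rw [hφ, hx, Module.End.mul_apply]

theorem multiplicityEval_tmul {σ : Representation k A V} {τ : Representation k (A × B) U}
    (S : Subrepresentation (multiplicityRep σ τ)) (v : V) (φ : S.toSubmodule) :
    multiplicityEval S (v ⊗ₜ φ) = φ.1 v := rfl

theorem multiplicityEval_bijective [IsAlgClosed k] [FiniteDimensional k U] [FiniteDimensional k V]
    {σ : Representation k A V} {τ : Representation k (A × B) U} (hσ : σ.IsIrreducible)
    (hτ : τ.IsIrreducible) {S : Subrepresentation (multiplicityRep σ τ)}
    (hS : S.toRepresentation.IsIrreducible) : Function.Bijective (multiplicityEval S) := by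
  have := isIrreducible_externalTprod hσ hS
  refine (Representation.IsIrreducible.bijective_or_eq_zero _).resolve_right fun heval => ?_
  have := nontrivial_of_isIrreducible hS
  obtain ⟨φ, hφ⟩ := exists_ne (0 : S.toSubmodule)
  refine hφ (Subtype.ext (DFunLike.ext _ _ fun v => ?_))
  rw [← multiplicityEval_tmul, heval]
  rfl

/-- The equivalence is evaluation `S ⊠ T → τ`, a nonzero map between irreducibles. -/
theorem exists_equiv_externalTprod [IsAlgClosed k] [FiniteDimensional k U]
    {τ : Representation k (A × B) U} (hτ : τ.IsIrreducible) :
    ∃ (S : Subrepresentation (τ.comp (MonoidHom.inl A B)))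
      (T : Subrepresentation (multiplicityRep S.toRepresentation τ)),
      S.toRepresentation.IsIrreducible ∧ T.toRepresentation.IsIrreducible ∧
        Nonempty ((externalTprod S.toRepresentation T.toRepresentation).Equiv τ) := by
  have := nontrivial_of_isIrreducible hτ
  obtain ⟨S, hS⟩ := exists_isIrreducible_toRepresentation (τ.comp (MonoidHom.inl A B))
  have := nontrivial_intertwiningMap_toRepresentation hS
  obtain ⟨T, hT⟩ := exists_isIrreducible_toRepresentation (multiplicityRep S.toRepresentation τ)
  exact ⟨S, T, hS, hT, ⟨(multiplicityEval T).ofBijective (multiplicityEval_bijective hS hτ hT)⟩⟩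

end ExternalTensorProduct

section FDRep

universe u v

variable {k : Type u} {G : Type v} [Field k] [Monoid G]

/-- The intertwining map underlying a morphism of `FDRep k G`. -/
noncomputable def intertwiningMapOfHom {X Y : FDRep k G} (f : X ⟶ Y) :
    Representation.IntertwiningMap X.ρ Y.ρ :=
  ((forget₂ (FDRep k G) (Rep k G)).map f).hom

/-- The morphism of `FDRep k G` given by an intertwining map. -/
noncomputable def homOfIntertwiningMap {X Y : FDRep k G}
    (f : Representation.IntertwiningMap X.ρ Y.ρ) : X ⟶ Y :=
  FDRep.forget₂HomLinearEquiv X Y (Rep.ofHom f)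

theorem mono_iff_injective_intertwiningMapOfHom {X Y : FDRep k G} (f : X ⟶ Y) :
    Mono f ↔ Function.Injective (intertwiningMapOfHom f) :=
  ((forget₂ (FDRep k G) (Rep k G)).mono_map_iff_mono f).symm.trans (Rep.mono_iff_injective _)

theorem isIso_iff_bijective_intertwiningMapOfHom {X Y : FDRep k G} (f : X ⟶ Y) :
    IsIso f ↔ Function.Bijective (intertwiningMapOfHom f) :=
  (isIso_iff_of_reflects_iso f (forget₂ (FDRep k G) (Rep k G))).symm.trans
    (ConcreteCategory.isIso_iff_bijective _)

theorem intertwiningMapOfHom_eq_zero_iff {X Y : FDRep k G} {f : X ⟶ Y} :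
    intertwiningMapOfHom f = 0 ↔ f = 0 := by
  refine ⟨fun h => ?_, by rintro rfl; rfl⟩
  apply (forget₂ (FDRep k G) (Rep k G)).map_injective
  exact Rep.hom_ext h

theorem isIrreducible_of_simple (V : FDRep k G) [Simple V] :
    Representation.IsIrreducible V.ρ where
  exists_pair_ne := by
    refine ⟨⊥, ⊤, fun h => id_nonzero V (intertwiningMapOfHom_eq_zero_iff.1 ?_)⟩
    ext v
    have hv : v ∈ (⊥ : Subrepresentation V.ρ) := h ▸ Submodule.mem_top
    exact (Submodule.mem_bot k).1 hv
  eq_bot_or_eq_top S := by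
    let i : FDRep.of S.toRepresentation ⟶ V :=
      homOfIntertwiningMap ⟨S.toSubmodule.subtype, fun _ => rfl⟩
    have : Mono i := (mono_iff_injective_intertwiningMapOfHom i).2 S.toSubmodule.injective_subtype
    refine (eq_or_ne i 0).imp (fun hi => ?_) (fun hi => ?_)
    · exact bot_unique fun v hv => congr($(intertwiningMapOfHom_eq_zero_iff.2 hi) ⟨v, hv⟩)
    · have hsurj := ((isIso_iff_bijective_intertwiningMapOfHom i).1
        (isIso_of_mono_of_nonzero hi)).surjective
      refine top_unique fun v _ => ?_
      obtain ⟨w, rfl⟩ := hsurj v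
      exact w.2

theorem simple_of_isIrreducible {V : FDRep k G} (hV : Representation.IsIrreducible V.ρ) :
    Simple V where
  mono_isIso_iff_nonzero f hf := by
    rw [isIso_iff_bijective_intertwiningMapOfHom, ne_eq, ← intertwiningMapOfHom_eq_zero_iff]
    refine ⟨fun hbij hzero => ?_, fun hne =>
      ⟨(mono_iff_injective_intertwiningMapOfHom f).1 hf,
        (Representation.IsIrreducible.surjective_or_eq_zero _).resolve_right hne⟩⟩
    have := nontrivial_of_isIrreducible hV
    obtain ⟨v, hv⟩ := exists_ne (0 : V)
    obtain ⟨x, rfl⟩ := hbij.surjective v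
    exact hv congr($hzero x)

end FDRep

section Characters

theorem eq_of_forall_trace_mul_eq {k V : Type*} [Field k] [AddCommGroup V] [Module k V]
    [FiniteDimensional k V] {f g : Module.End k V}
    (h : ∀ t : Module.End k V, LinearMap.trace k V (t * f) = LinearMap.trace k V (t * g)) :
    f = g := by
  have trace_rankOne_mul (φ : Module.Dual k V) (v : V) (t : Module.End k V) :
      LinearMap.trace k V (φ.smulRight v * t) = φ (t v) :=
    LinearMap.trace_smulRight (φ ∘ₗ t) v
  refine LinearMap.ext fun v => sub_eq_zero.1 ((Module.forall_dual_apply_eq_zero_iff k _).1 ?_)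
  intro φ
  rw [map_sub, ← trace_rankOne_mul, ← trace_rankOne_mul, h, sub_self]

theorem apply_eq_one_of_character_mul_eq {k G V : Type*} [Field k] [IsAlgClosed k] [Monoid G]
    [AddCommGroup V] [Module k V] [FiniteDimensional k V] {ρ : Representation k G V}
    (hρ : ρ.IsIrreducible) {n : G} (hn : ∀ g, ρ.character (g * n) = ρ.character g) : ρ n = 1 := by
  refine eq_of_forall_trace_mul_eq fun t => ?_
  obtain ⟨a, rfl⟩ := asAlgebraHom_surjective_of_isIrreducible hρ t
  rw [mul_one]
  induction a using MonoidAlgebra.induction_linear with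
  | zero => simp
  | add a b ha hb => rw [map_add, add_mul, map_add, map_add, ha, hb]
  | single g r =>
    rw [Representation.asAlgebraHom_single, smul_mul_assoc, ← map_mul, map_smul, map_smul]
    exact congr(r • $(hn g))

theorem exists_monoidHom_apply_eq_algebraMap {k G Z V : Type*} [Field k] [IsAlgClosed k]
    [Monoid G] [Monoid Z] [AddCommGroup V] [Module k V] [FiniteDimensional k V]
    {ρ : Representation k G V} (hρ : ρ.IsIrreducible) {ι : Z →* G}
    (hι : ∀ z, ι z ∈ Submonoid.center G) :
    ∃ c : Z →* k, ∀ z, ρ (ι z) = algebraMap k (Module.End k V) (c z) := by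
  have schur (z : Z) : ∃ c : k, algebraMap k (Module.End k V) c = ρ (ι z) := by
    obtain ⟨c, hc⟩ :=
      Representation.IsIrreducible.algebraMap_intertwiningMap_bijective_of_isAlgClosed.2
        (Representation.IntertwiningMap.centralMul ρ (ι z) (hι z))
    exact ⟨c, congr(($hc).toLinearMap)⟩
  choose c hc using schur
  have := nontrivial_of_isIrreducible hρ
  have algebraMap_injective := FaithfulSMul.algebraMap_injective k (Module.End k V)
  exact ⟨{ toFun := c
           map_one' := algebraMap_injective (by simp only [hc, map_one])
           map_mul' := fun z w => algebraMap_injective (by simp only [hc, map_mul]) },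
    fun z => (hc z).symm⟩

end Characters

section IrrChar

variable {G H : Type} [Group G] [Group H]

theorem character_mem_irrChar {V : Type} [AddCommGroup V] [Module ℂ V] [FiniteDimensional ℂ V]
    {ρ : Representation ℂ G V} (hρ : ρ.IsIrreducible) : ρ.character ∈ IrrChar G :=
  ⟨FDRep.of ρ, simple_of_isIrreducible hρ, rfl⟩

theorem exists_isIrreducible_of_mem_irrChar {χ : G → ℂ} (hχ : χ ∈ IrrChar G) :
    ∃ V : FDRep ℂ G, Representation.IsIrreducible V.ρ ∧ Representation.character V.ρ = χ := by
  obtain ⟨V, _, rfl⟩ := hχ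
  exact ⟨V, isIrreducible_of_simple V, rfl⟩

theorem natCast_charDeg {χ : G → ℂ} (hχ : χ ∈ IrrChar G) : (charDeg χ : ℂ) = χ 1 := by
  obtain ⟨V, -, rfl⟩ := exists_isIrreducible_of_mem_irrChar hχ
  simp [charDeg]

theorem apply_one_ne_zero_of_mem_irrChar {χ : G → ℂ} (hχ : χ ∈ IrrChar G) : χ 1 ≠ 0 := by
  obtain ⟨V, hV, rfl⟩ := exists_isIrreducible_of_mem_irrChar hχ
  have := nontrivial_of_isIrreducible hV
  rw [Representation.char_one, Nat.cast_ne_zero]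
  exact Module.finrank_pos.ne'

theorem eq_of_smul_eq_of_mem_irrChar {χ ψ : G → ℂ} (hχ : χ ∈ IrrChar G) (hψ : ψ ∈ IrrChar G)
    {c : ℂ} (h : χ = c • ψ) : χ = ψ := by
  obtain ⟨V, hV, rfl⟩ := exists_isIrreducible_of_mem_irrChar hχ
  obtain ⟨W, hW, rfl⟩ := exists_isIrreducible_of_mem_irrChar hψ
  obtain ⟨e⟩ := nonempty_equiv_of_character_eq_smul hV hW h
  exact Representation.char_iso e

theorem comp_mem_irrChar_iff {f : H →* G} (hf : Function.Surjective f) {χ : G → ℂ} :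
    χ ∘ f ∈ IrrChar H ↔ χ ∈ IrrChar G := by
  refine ⟨fun hχ => ?_, fun hχ => ?_⟩
  · obtain ⟨V, hV, hVχ⟩ := exists_isIrreducible_of_mem_irrChar hχ
    have hker : f.ker ≤ MonoidHom.ker V.ρ := fun n hn =>
      apply_eq_one_of_character_mul_eq hV fun h => by simp [hVχ, MonoidHom.mem_ker.1 hn]
    obtain ⟨σ, hσ⟩ := exists_comp_eq_of_ker_le hf hker
    have hσχ : σ.character ∘ f = χ ∘ f := by rw [← hVχ, ← hσ]; rfl
    rw [← hσ, isIrreducible_comp_iff hf] at hV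
    exact hf.injective_comp_right hσχ ▸ character_mem_irrChar hV
  · obtain ⟨V, hV, rfl⟩ := exists_isIrreducible_of_mem_irrChar hχ
    exact character_mem_irrChar ((isIrreducible_comp_iff hf).2 hV)

theorem mul_mem_irrChar_prod {α : G → ℂ} {β : H → ℂ} (hα : α ∈ IrrChar G) (hβ : β ∈ IrrChar H) :
    (fun x : G × H => α x.1 * β x.2) ∈ IrrChar (G × H) := by
  obtain ⟨V, hV, rfl⟩ := exists_isIrreducible_of_mem_irrChar hα
  obtain ⟨W, hW, rfl⟩ := exists_isIrreducible_of_mem_irrChar hβ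
  rw [← funext (character_externalTprod V.ρ W.ρ)]
  exact character_mem_irrChar (isIrreducible_externalTprod hV hW)

theorem exists_eq_mul_of_mem_irrChar_prod {χ : G × H → ℂ} (hχ : χ ∈ IrrChar (G × H)) :
    ∃ α ∈ IrrChar G, ∃ β ∈ IrrChar H, ∀ g h, χ (g, h) = α g * β h := by
  obtain ⟨V, hV, rfl⟩ := exists_isIrreducible_of_mem_irrChar hχ
  obtain ⟨S, T, hS, hT, ⟨e⟩⟩ := exists_equiv_externalTprod hV
  refine ⟨_, character_mem_irrChar hS, _, character_mem_irrChar hT, fun g h => ?_⟩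
  rw [← Representation.char_iso e, character_externalTprod]

end IrrChar

section CentralCharacter

variable {H Z : Type} [Group H]

/-- `χ` has central character `lam` along `ι`: translation by `ι z` multiplies `χ` by `lam z`. For
an irreducible `χ` and a linear `lam` this is equivalent to `χ` lying over `lam`. -/
def HasCentralCharacter (ι : Z → H) (lam : Z → ℂ) (χ : H → ℂ) : Prop :=
  ∀ h z, χ (h * ι z) = χ h * lam z

/-- The set `Irr(H|lam)` of irreducible characters of `H` with central character `lam`. -/
def irrCharOver (ι : Z → H) (lam : Z → ℂ) : Set (H → ℂ) :=
  {χ ∈ IrrChar H | HasCentralCharacter ι lam χ}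

theorem HasCentralCharacter.unique {ι : Z → H} {lam mu : Z → ℂ} {χ : H → ℂ} (hχ : χ 1 ≠ 0)
    (hlam : HasCentralCharacter ι lam χ) (hmu : HasCentralCharacter ι mu χ) : lam = mu :=
  funext fun z => mul_left_cancel₀ hχ ((hlam 1 z).symm.trans (hmu 1 z))

variable [Group Z] {ι : Z →* H}

theorem exists_hasCentralCharacter (hι : ∀ z h, Commute (ι z) h) {χ : H → ℂ}
    (hχ : χ ∈ IrrChar H) : ∃ mu : Z →* ℂ, HasCentralCharacter ι mu χ := by
  obtain ⟨V, hV, rfl⟩ := exists_isIrreducible_of_mem_irrChar hχ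
  obtain ⟨mu, hmu⟩ := exists_monoidHom_apply_eq_algebraMap hV
    (fun z => Submonoid.mem_center_iff.2 fun h => (hι z h).symm)
  refine ⟨mu, fun h z => ?_⟩
  rw [Representation.character, map_mul, hmu, ← Algebra.commutes, ← Algebra.smul_def, map_smul,
    smul_eq_mul, mul_comm, Representation.character]

theorem exists_monoidHom_coe_eq_of_charDeg_eq_one (hZ : ∀ z w : Z, Commute z w) {lam : Z → ℂ}
    (hlam : lam ∈ IrrChar Z) (hdeg : charDeg lam = 1) : ∃ mu : Z →* ℂ, ⇑mu = lam := by
  obtain ⟨mu, hmu⟩ := exists_hasCentralCharacter (ι := MonoidHom.id Z) hZ hlam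
  have lam_one : lam 1 = 1 := by rw [← natCast_charDeg hlam, hdeg, Nat.cast_one]
  refine ⟨mu, funext fun z => ?_⟩
  simpa [lam_one] using (hmu 1 z).symm

theorem sum_mul_conj_ne_zero_iff [Fintype Z] (mu nu : Z →* ℂ) :
    ∑ z, mu z * starRingEnd ℂ (nu z) ≠ 0 ↔ mu = nu := by
  classical
  let conj_nu : Z →* ℂ := (starRingEnd ℂ).toMonoidHom.comp nu
  have mul_conj : nu * conj_nu = 1 := MonoidHom.ext fun z => by
    have hnorm : ‖nu z‖ = 1 := Complex.norm_eq_one_of_pow_eq_one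
      (by rw [← map_pow, pow_card_eq_one, map_one]) Fintype.card_ne_zero
    exact (Complex.mul_conj' (nu z)).trans (by simp [hnorm])
  have mul_conj_eq_one_iff : mu * conj_nu = 1 ↔ mu = nu := by
    refine ⟨fun h => ?_, fun h => h ▸ mul_conj⟩
    calc mu = mu * (nu * conj_nu) := by rw [mul_conj, mul_one]
      _ = nu := by rw [mul_left_comm, h, mul_one]
  have sum_eq : ∑ z, mu z * starRingEnd ℂ (nu z) =
      ((if mu * conj_nu = 1 then Fintype.card Z else 0 : ℕ) : ℂ) := sum_hom_units (mu * conj_nu)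
  rw [sum_eq, Nat.cast_ne_zero, ne_eq, ite_eq_right_iff, ← mul_conj_eq_one_iff]
  simp only [Fintype.card_ne_zero, imp_false, not_not]

theorem finsum_mul_conj_ne_zero_iff_hasCentralCharacter [Finite Z] (hι : ∀ z h, Commute (ι z) h)
    (lam : Z →* ℂ) {χ : H → ℂ} (hχ : χ ∈ IrrChar H) :
    ∑ᶠ z, χ (ι z) * starRingEnd ℂ (lam z) ≠ 0 ↔ HasCentralCharacter ι lam χ := by
  have := Fintype.ofFinite Z
  obtain ⟨mu, hmu⟩ := exists_hasCentralCharacter hι hχ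
  have hχ_one := apply_one_ne_zero_of_mem_irrChar hχ
  have apply_eq (z : Z) : χ (ι z) = χ 1 * mu z := by rw [← hmu 1 z, one_mul]
  simp only [finsum_eq_sum_of_fintype, apply_eq, mul_assoc]
  rw [← Finset.mul_sum, mul_ne_zero_iff_left hχ_one, sum_mul_conj_ne_zero_iff]
  exact ⟨fun h => h ▸ hmu, fun h => DFunLike.coe_injective (hmu.unique hχ_one h)⟩

theorem acdOver_eq_average_irrCharOver [Finite Z] (hι : ∀ z h, Commute (ι z) h) (lam : Z →* ℂ) :
    acdOver ι lam = (∑ᶠ χ ∈ irrCharOver ι lam, (charDeg χ : ℝ)) / (irrCharOver ι lam).ncard := by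
  have hset : {χ ∈ IrrChar H | ∑ᶠ z, χ (ι z) * starRingEnd ℂ (lam z) ≠ 0} = irrCharOver ι lam :=
    Set.ext fun _ => and_congr_right (finsum_mul_conj_ne_zero_iff_hasCentralCharacter hι lam)
  rw [acdOver, acdRel, hset]

end CentralCharacter

section CentralProduct

variable {G : Type} [Group G] {M C : Subgroup G}

/-- The function `m * c ↦ α m * β c` on a central product `G = MC`. It is well defined when `α`
and `β` have the same central character on `M ∩ C`. -/
noncomputable def centralProductChar (α : M → ℂ) (β : C → ℂ) : G → ℂ :=
  Function.extend (fun x : M × C => (x.1 * x.2 : G)) (fun x => α x.1 * β x.2) 0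

variable {lam : ↥(M ⊓ C) → ℂ} {α : M → ℂ} {β : C → ℂ}

theorem centralProductChar_mul (hcomm : ∀ m ∈ M, ∀ c ∈ C, m * c = c * m)
    (hα : HasCentralCharacter (Subgroup.inclusion (inf_le_left : M ⊓ C ≤ M)) lam α)
    (hβ : HasCentralCharacter (Subgroup.inclusion (inf_le_right : M ⊓ C ≤ C)) lam β)
    (m : M) (c : C) : centralProductChar α β (m * c : G) = α m * β c := by
  refine Function.FactorsThrough.extend_apply (f := fun x : M × C => (x.1 * x.2 : G))
    (g := fun x => α x.1 * β x.2) ?_ 0 (m, c)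
  rintro ⟨m, c⟩ ⟨m', c'⟩ (h : (m * c : G) = m' * c')
  have hz : (m' : G)⁻¹ * m = c' * (c : G)⁻¹ := by
    rw [inv_mul_eq_iff_eq_mul, ← mul_assoc, eq_mul_inv_iff_mul_eq, h]
  let z : ↥(M ⊓ C) := ⟨(m' : G)⁻¹ * m, (m'⁻¹ * m).2, hz ▸ (c' * c⁻¹).2⟩
  have hm : m = m' * Subgroup.inclusion inf_le_left z := Subtype.ext (mul_inv_cancel_left _ _).symm
  have hc : c' = c * Subgroup.inclusion inf_le_right z := Subtype.ext <| by
    change (c' : G) = c * (z : G)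
    rw [← hcomm z z.2.1 c c.2]
    exact (eq_mul_inv_iff_mul_eq.1 hz).symm
  change α m * β c = α m' * β c'
  rw [hm, hc, hα, hβ, mul_right_comm, mul_assoc]

theorem exists_surjective_monoidHom_prod (hprod : ∀ g : G, ∃ m ∈ M, ∃ c ∈ C, g = m * c)
    (hcomm : ∀ m ∈ M, ∀ c ∈ C, m * c = c * m) :
    ∃ f : M × C →* G, Function.Surjective f ∧ ∀ x, f x = x.1 * x.2 := by
  refine ⟨M.subtype.noncommCoprod C.subtype fun m c => hcomm m m.2 c c.2, fun g => ?_, fun _ => rfl⟩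
  obtain ⟨m, hm, c, hc, rfl⟩ := hprod g
  exact ⟨(⟨m, hm⟩, ⟨c, hc⟩), rfl⟩

theorem centralProductChar_mem_irrCharOver
    (hprod : ∀ g : G, ∃ m ∈ M, ∃ c ∈ C, g = m * c) (hcomm : ∀ m ∈ M, ∀ c ∈ C, m * c = c * m)
    (hα : α ∈ irrCharOver (Subgroup.inclusion (inf_le_left : M ⊓ C ≤ M)) lam)
    (hβ : β ∈ irrCharOver (Subgroup.inclusion (inf_le_right : M ⊓ C ≤ C)) lam) :
    centralProductChar α β ∈ irrCharOver (M ⊓ C).subtype lam := by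
  have apply_mul := centralProductChar_mul hcomm hα.2 hβ.2
  obtain ⟨f, hf, f_apply⟩ := exists_surjective_monoidHom_prod hprod hcomm
  have comp_eq : centralProductChar α β ∘ f = fun x => α x.1 * β x.2 :=
    funext fun x => by rw [Function.comp_apply, f_apply, apply_mul]
  refine ⟨(comp_mem_irrChar_iff hf).1 (comp_eq ▸ mul_mem_irrChar_prod hα.1 hβ.1), fun g z => ?_⟩
  obtain ⟨m, hm, c, hc, rfl⟩ := hprod g
  have apply_mul_z := apply_mul ⟨m, hm⟩ (⟨c, hc⟩ * Subgroup.inclusion inf_le_right z)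
  rw [hβ.2, ← mul_assoc, ← apply_mul] at apply_mul_z
  rwa [mul_assoc]

theorem exists_centralProductChar_eq_of_mem_irrCharOver
    (hprod : ∀ g : G, ∃ m ∈ M, ∃ c ∈ C, g = m * c) (hcomm : ∀ m ∈ M, ∀ c ∈ C, m * c = c * m)
    {χ : G → ℂ} (hχ : χ ∈ irrCharOver (M ⊓ C).subtype lam) :
    ∃ α ∈ irrCharOver (Subgroup.inclusion (inf_le_left : M ⊓ C ≤ M)) lam,
      ∃ β ∈ irrCharOver (Subgroup.inclusion (inf_le_right : M ⊓ C ≤ C)) lam,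
        centralProductChar α β = χ := by
  obtain ⟨f, hf, f_apply⟩ := exists_surjective_monoidHom_prod hprod hcomm
  obtain ⟨α, hα, β, hβ, comp_eq⟩ :=
    exists_eq_mul_of_mem_irrChar_prod ((comp_mem_irrChar_iff hf).2 hχ.1)
  have apply_mul (m : M) (c : C) : χ (m * c) = α m * β c := by
    rw [← comp_eq, Function.comp_apply, f_apply]
  have hαlam : HasCentralCharacter (Subgroup.inclusion (inf_le_left : M ⊓ C ≤ M)) lam α := by
    refine fun m z => mul_right_cancel₀ (apply_one_ne_zero_of_mem_irrChar hβ) ?_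
    rw [← apply_mul, mul_right_comm, ← apply_mul, OneMemClass.coe_one, mul_one, mul_one]
    exact hχ.2 m z
  have hβlam : HasCentralCharacter (Subgroup.inclusion (inf_le_right : M ⊓ C ≤ C)) lam β := by
    refine fun c z => mul_left_cancel₀ (apply_one_ne_zero_of_mem_irrChar hα) ?_
    rw [← apply_mul, ← mul_assoc, ← apply_mul, OneMemClass.coe_one, one_mul, one_mul]
    exact hχ.2 c z
  refine ⟨α, ⟨hα, hαlam⟩, β, ⟨hβ, hβlam⟩, funext fun g => ?_⟩
  obtain ⟨m, hm, c, hc, rfl⟩ := hprod g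
  exact (centralProductChar_mul hcomm hαlam hβlam ⟨m, hm⟩ ⟨c, hc⟩).trans
    (apply_mul ⟨m, hm⟩ ⟨c, hc⟩).symm

theorem image_centralProductChar_irrCharOver
    (hprod : ∀ g : G, ∃ m ∈ M, ∃ c ∈ C, g = m * c) (hcomm : ∀ m ∈ M, ∀ c ∈ C, m * c = c * m)
    (lam : ↥(M ⊓ C) → ℂ) :
    Set.image2 centralProductChar
        (irrCharOver (Subgroup.inclusion (inf_le_left : M ⊓ C ≤ M)) lam)
        (irrCharOver (Subgroup.inclusion (inf_le_right : M ⊓ C ≤ C)) lam) =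
      irrCharOver (M ⊓ C).subtype lam :=
  Set.Subset.antisymm
    (Set.image2_subset_iff.2 fun _ hα _ hβ => centralProductChar_mem_irrCharOver hprod hcomm hα hβ)
    fun _ hχ => exists_centralProductChar_eq_of_mem_irrCharOver hprod hcomm hχ

theorem centralProductChar_injOn (hcomm : ∀ m ∈ M, ∀ c ∈ C, m * c = c * m)
    (lam : ↥(M ⊓ C) → ℂ) :
    Set.InjOn (Function.uncurry centralProductChar)
      (irrCharOver (Subgroup.inclusion (inf_le_left : M ⊓ C ≤ M)) lam ×ˢ
        irrCharOver (Subgroup.inclusion (inf_le_right : M ⊓ C ≤ C)) lam) := by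
  rintro ⟨α, β⟩ ⟨hα, hβ⟩ ⟨α', β'⟩ ⟨hα', hβ'⟩ h
  change centralProductChar α β = centralProductChar α' β' at h
  have mul_eq (m : M) (c : C) : α m * β c = α' m * β' c := by
    rw [← centralProductChar_mul hcomm hα.2 hβ.2, h, centralProductChar_mul hcomm hα'.2 hβ'.2]
  refine Prod.ext (eq_of_smul_eq_of_mem_irrChar (c := β' 1 / β 1) hα.1 hα'.1 (funext fun m => ?_))
    (eq_of_smul_eq_of_mem_irrChar (c := α' 1 / α 1) hβ.1 hβ'.1 (funext fun c => ?_))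
  · rw [Pi.smul_apply, smul_eq_mul, div_mul_eq_mul_div,
      eq_div_iff (apply_one_ne_zero_of_mem_irrChar hβ.1), mul_eq, mul_comm]
  · rw [Pi.smul_apply, smul_eq_mul, div_mul_eq_mul_div,
      eq_div_iff (apply_one_ne_zero_of_mem_irrChar hα.1), mul_comm, mul_eq]

theorem charDeg_centralProductChar
    (hprod : ∀ g : G, ∃ m ∈ M, ∃ c ∈ C, g = m * c) (hcomm : ∀ m ∈ M, ∀ c ∈ C, m * c = c * m)
    (hα : α ∈ irrCharOver (Subgroup.inclusion (inf_le_left : M ⊓ C ≤ M)) lam)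
    (hβ : β ∈ irrCharOver (Subgroup.inclusion (inf_le_right : M ⊓ C ≤ C)) lam) :
    charDeg (centralProductChar α β) = charDeg α * charDeg β := by
  have apply_one := centralProductChar_mul hcomm hα.2 hβ.2 1 1
  rw [OneMemClass.coe_one, OneMemClass.coe_one, one_mul,
    ← natCast_charDeg (centralProductChar_mem_irrCharOver hprod hcomm hα hβ).1,
    ← natCast_charDeg hα.1, ← natCast_charDeg hβ.1] at apply_one
  exact_mod_cast apply_one

end CentralProduct

theorem finsum_mem_image2_div_ncard {K α β γ : Type*} [Semifield K] {s : Set α} {t : Set β}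
    {Φ : α → β → γ} (hΦ : Set.InjOn (Function.uncurry Φ) (s ×ˢ t)) {f : α → K} {g : β → K}
    {h : γ → K} (hmul : ∀ a ∈ s, ∀ b ∈ t, h (Φ a b) = f a * g b) :
    (∑ᶠ c ∈ Set.image2 Φ s t, h c) / (Set.image2 Φ s t).ncard =
      ((∑ᶠ a ∈ s, f a) / s.ncard) * ((∑ᶠ b ∈ t, g b) / t.ncard) := by
  rw [← Set.image_uncurry_prod, hΦ.ncard_image, Set.ncard_prod, finsum_mem_image hΦ,
    div_mul_div_comm, Nat.cast_mul]
  rcases s.finite_or_infinite.symm with hs | hs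
  · simp [hs.ncard]
  rcases t.finite_or_infinite.symm with ht | ht
  · simp [ht.ncard]
  lift s to Finset α using hs
  lift t to Finset β using ht
  rw [← Finset.coe_product, finsum_mem_coe_finset, finsum_mem_coe_finset, finsum_mem_coe_finset,
    Finset.sum_mul_sum, ← Finset.sum_product']
  congr 1
  refine Finset.sum_congr rfl fun x hx => ?_
  exact hmul x.1 (Finset.mem_product.1 hx).1 x.2 (Finset.mem_product.1 hx).2

/-- Where `Irr(G|λ)` is infinite, both sides are `0` because `Set.ncard` is. -/
theorem acdOver_central_product_general {G : Type} [Group G] {M C : Subgroup G}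
    [Finite ↥(M ⊓ C)] (hprod : ∀ g : G, ∃ m ∈ M, ∃ c ∈ C, g = m * c)
    (hcomm : ∀ m ∈ M, ∀ c ∈ C, m * c = c * m)
    {lam : ↥(M ⊓ C) → ℂ} (hlam : lam ∈ IrrChar ↥(M ⊓ C)) (hdeg : charDeg lam = 1) :
    acdOver (M ⊓ C).subtype lam =
      acdOver (Subgroup.inclusion (inf_le_left : M ⊓ C ≤ M)) lam *
        acdOver (Subgroup.inclusion (inf_le_right : M ⊓ C ≤ C)) lam := by
  have commute_coe (z : ↥(M ⊓ C)) (g : G) : Commute (z : G) g := by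
    obtain ⟨m, hm, c, hc, rfl⟩ := hprod g
    have hzm : Commute (z : G) m := (hcomm m hm z z.2.2).symm
    exact hzm.mul_right (hcomm z z.2.1 c hc)
  obtain ⟨lam, rfl⟩ := exists_monoidHom_coe_eq_of_charDeg_eq_one
    (fun z w => Subtype.ext (commute_coe z w)) hlam hdeg
  rw [acdOver_eq_average_irrCharOver commute_coe,
    acdOver_eq_average_irrCharOver (ι := Subgroup.inclusion inf_le_left) fun z m =>
      Subtype.ext (commute_coe z m),
    acdOver_eq_average_irrCharOver (ι := Subgroup.inclusion inf_le_right) fun z c =>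
      Subtype.ext (commute_coe z c),
    ← image_centralProductChar_irrCharOver hprod hcomm]
  refine finsum_mem_image2_div_ncard (centralProductChar_injOn hcomm lam) fun α hα β hβ => ?_
  rw [charDeg_centralProductChar hprod hcomm hα hβ, Nat.cast_mul]

/-- If `G = MC` is a central product with `Z = M ∩ C`, then for every linear
character `λ` of `Z` one has `acd(G|λ) = acd(M|λ) ⬝ acd(C|λ)`. -/
theorem acdOver_central_product (G : Type) [Group G] [Finite G] (M C : Subgroup G)
    (hprod : ∀ g : G, ∃ m ∈ M, ∃ c ∈ C, g = m * c)
    (hcomm : ∀ m ∈ M, ∀ c ∈ C, m * c = c * m)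
    (lam : ↥(M ⊓ C) → ℂ) (hlam : lam ∈ IrrChar ↥(M ⊓ C)) (hdeg : charDeg lam = 1) :
    acdOver (fun z : ↥(M ⊓ C) => (z : G)) lam =
      acdOver (Subgroup.inclusion (inf_le_left : M ⊓ C ≤ M)) lam *
        acdOver (Subgroup.inclusion (inf_le_right : M ⊓ C ≤ C)) lam :=
  acdOver_central_product_general hprod hcomm hlam hdeg
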